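/- Let w ∈ W^J be a minimal coset representative and s ∈ S with s ∉ D_L(w). Write sw = vu with v ∈ W^J, u ∈ W_J. Then ℓ(v) ≥ ℓ(w), and S(v) = S(w) if s ∈ J and s commutes with every element of S(v), while S(v) = S(w) ∪ {s} otherwise. -/

import Mathlib

variable {B : Type*} {W : Type*} [Group W] {M : CoxeterMatrix B}

/-- The standard parabolic subgroup `W_J`. -/
def CoxeterSystem.parabolic (cs : CoxeterSystem M W) (J : Set B) : Subgroup W :=
  Subgroup.closure (cs.simple '' J)

/-- `v` is a minimal length representative of its coset `v W_J`. -/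
def CoxeterSystem.IsMinimalRep (cs : CoxeterSystem M W) (J : Set B) (v : W) :
    Prop :=
  ∀ u ∈ cs.parabolic J, cs.length v ≤ cs.length (v * u)

/-- The support `S(w)`: the smallest set of simple reflections generating a
standard parabolic subgroup containing `w`. -/
def CoxeterSystem.support (cs : CoxeterSystem M W) (w : W) : Set B :=
  {i | ∀ J : Set B, w ∈ cs.parabolic J → i ∈ J}

open Polynomial.Chebyshev in
/-- A product of two reflections whose Cartan pairing is `4 cos² (π / m)` has order dividing `m`. -/
theorem Module.reflection_mul_reflection_pow_eq_one {V : Type*} [AddCommGroup V] [Module ℝ V]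
    {x y : V} {f g : Module.Dual ℝ V} (hf : f x = 2) (hg : g y = 2) (m : ℕ) (hm : 2 ≤ m)
    (hfy : f y = -2 * Real.cos (Real.pi / m)) (hgx : g x = -2 * Real.cos (Real.pi / m)) :
    (Module.reflection hf * Module.reflection hg) ^ m = 1 := by
  ext z
  rw [Module.reflection_mul_reflection_pow_apply hf hg m z]
  obtain rfl | hm3 := hm.eq_or_lt
  · have hfy' : f y = 0 := by simpa using hfy
    have hgx' : g x = 0 := by simpa using hgx
    simp only [hfy', hgx']
    norm_num
    module
  have hmpos : (0 : ℝ) < m := by exact_mod_cast (by omega : 0 < m)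
  set θ : ℝ := 2 * (Real.pi / m) with hθ
  have hmθ : (m : ℝ) * θ = 2 * Real.pi := by rw [hθ]; field_simp
  have hsin : Real.sin θ ≠ 0 := by
    have h3 : (3 : ℝ) ≤ m := by exact_mod_cast hm3
    have h1 : 0 < θ := by positivity
    have h2 : θ < Real.pi := by nlinarith [Real.pi_pos]
    exact (Real.sin_pos_of_pos_of_lt_pi h1 h2).ne'
  have ht : f y * g x - 2 = 2 * Real.cos θ := by
    rw [hfy, hgx, hθ, Real.cos_two_mul]; ring
  rw [ht]
  have hS (n : ℤ) := S_two_mul_real_cos θ n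
  obtain ⟨k, rfl | rfl⟩ := m.even_or_odd'
  · have hk : (S ℝ ((k : ℤ) - 1)).eval (2 * Real.cos θ) = 0 := by
      refine (mul_eq_zero.mp ((hS _).trans ?_)).resolve_right hsin
      push_cast at hmθ ⊢
      rw [show ((k : ℝ) - 1 + 1) * θ = Real.pi by linarith, Real.sin_pi]
    rw [show (((2 * k : ℕ) : ℤ) - 2) / 2 = (k : ℤ) - 1 by omega,
      show (((2 * k : ℕ) : ℤ) - 1) / 2 = (k : ℤ) - 1 by omega, hk]
    simp
  · have hk : (S ℝ (k : ℤ)).eval (2 * Real.cos θ) +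
        (S ℝ ((k : ℤ) - 1)).eval (2 * Real.cos θ) = 0 := by
      refine (mul_eq_zero.mp ((add_mul _ _ _).trans ?_)).resolve_right hsin
      rw [hS, hS]
      push_cast at hmθ ⊢
      rw [show ((k : ℝ) + 1) * θ = 2 * Real.pi - ((k : ℝ) - 1 + 1) * θ by linarith,
        Real.sin_two_pi_sub]
      ring
    rw [show (((2 * k + 1 : ℕ) : ℤ) - 2) / 2 = (k : ℤ) - 1 by omega,
      show (((2 * k + 1 : ℕ) : ℤ) - 1) / 2 = (k : ℤ) by omega,
      show (((2 * k + 1 : ℕ) : ℤ) - 3) / 2 = (k : ℤ) - 1 by omega,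
      show (((2 * k + 1 : ℕ) : ℤ)) / 2 = (k : ℤ) by omega, hk]
    simp

theorem Real.cos_pi_div_natCast_eq_zero {m : ℕ} (hm : m ≠ 1)
    (h : Real.cos (Real.pi / m) = 0) : m = 2 := by
  by_contra h2
  rcases Nat.eq_zero_or_pos m with rfl | hpos
  · simp at h
  have h3 : (3 : ℝ) ≤ m := by exact_mod_cast (by omega : 3 ≤ m)
  have hpi := Real.pi_pos
  have hlt : Real.pi / m < Real.pi / 2 := by gcongr; linarith
  have hpos' : 0 < Real.pi / m := by positivity
  exact (Real.cos_pos_of_mem_Ioo ⟨by linarith, hlt⟩).ne' h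

namespace CoxeterMatrix

variable (M)

/-- The simple coroot of index `i`, as a linear form on the space spanned by the simple roots. -/
noncomputable def simpleCoroot (i : B) : Module.Dual ℝ (B →₀ ℝ) :=
  Finsupp.linearCombination ℝ fun j ↦ -2 * Real.cos (Real.pi / M i j)

theorem simpleCoroot_single (i j : B) :
    M.simpleCoroot i (Finsupp.single j 1) = -2 * Real.cos (Real.pi / M i j) := by
  simp [simpleCoroot]

theorem simpleCoroot_single_self (i : B) : M.simpleCoroot i (Finsupp.single i 1) = 2 := by
  simp [simpleCoroot_single]

/-- The simple reflection of index `i` in the geometric representation. -/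
noncomputable def simpleReflection (i : B) : (B →₀ ℝ) ≃ₗ[ℝ] (B →₀ ℝ) :=
  Module.reflection (M.simpleCoroot_single_self i)

theorem simpleReflection_apply (i : B) (x : B →₀ ℝ) :
    M.simpleReflection i x = x - M.simpleCoroot i x • Finsupp.single i 1 :=
  Module.reflection_apply _ _

theorem isLiftable_simpleReflection : M.IsLiftable M.simpleReflection := by
  intro i j
  rcases eq_or_ne i j with rfl | hij
  · rw [M.diagonal, pow_one]
    exact LinearEquiv.ext (Module.involutive_reflection (M.simpleCoroot_single_self i))
  rcases Nat.eq_zero_or_pos (M i j) with h0 | hpos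
  · rw [h0, pow_zero]
  have h1 := M.off_diagonal i j hij
  exact Module.reflection_mul_reflection_pow_eq_one _ _ _ (by omega) (M.simpleCoroot_single i j)
    (by rw [M.simpleCoroot_single, M.symmetric])

end CoxeterMatrix

namespace CoxeterSystem

variable (cs : CoxeterSystem M W)

/-! ### The geometric representation -/

/-- The geometric representation of a Coxeter group on the space spanned by the simple roots. -/
noncomputable def geometricRep : W →* ((B →₀ ℝ) ≃ₗ[ℝ] (B →₀ ℝ)) :=
  cs.lift ⟨M.simpleReflection, M.isLiftable_simpleReflection⟩

theorem geometricRep_simple (i : B) : cs.geometricRep (cs.simple i) = M.simpleReflection i :=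
  cs.lift_apply_simple _ i

theorem geometricRep_simple_single (i j : B) :
    cs.geometricRep (cs.simple i) (Finsupp.single j 1) =
      Finsupp.single j 1 + (2 * Real.cos (Real.pi / M i j)) • Finsupp.single i 1 := by
  rw [geometricRep_simple, M.simpleReflection_apply, M.simpleCoroot_single]
  module

theorem geometricRep_simple_single_self (i : B) :
    cs.geometricRep (cs.simple i) (Finsupp.single i 1) = -Finsupp.single i 1 := by
  rw [geometricRep_simple, M.simpleReflection_apply, M.simpleCoroot_single_self]
  module

theorem geometricRep_apply_of_notMem {J : Set B} {w : W} (hw : w ∈ cs.parabolic J) {i : B}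
    (hi : i ∉ J) (x : B →₀ ℝ) : cs.geometricRep w x i = x i := by
  induction hw using Subgroup.closure_induction generalizing x with
  | mem w hw =>
    obtain ⟨j, hj, rfl⟩ := hw
    have hji : j ≠ i := fun h ↦ hi (h ▸ hj)
    rw [geometricRep_simple, M.simpleReflection_apply]
    simp [hji]
  | one => simp
  | mul v w _ _ hv hw => rw [map_mul, LinearEquiv.mul_apply, hv, hw]
  | inv w _ hw =>
    rw [← hw, ← LinearEquiv.mul_apply, ← map_mul, mul_inv_cancel, map_one, LinearEquiv.coe_one,
      id_eq]

theorem simple_mem_parabolic {J : Set B} {i : B} (hi : i ∈ J) : cs.simple i ∈ cs.parabolic J :=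
  Subgroup.subset_closure ⟨i, hi, rfl⟩

theorem simple_mem_parabolic_iff {J : Set B} {i : B} : cs.simple i ∈ cs.parabolic J ↔ i ∈ J := by
  refine ⟨fun h ↦ ?_, cs.simple_mem_parabolic⟩
  by_contra hi
  have := cs.geometricRep_apply_of_notMem h hi (Finsupp.single i 1)
  rw [geometricRep_simple_single_self] at this
  norm_num at this

theorem eq_two_of_conj_simple_mem_parabolic {K : Set B} {i j : B} (hi : i ∉ K) (hj : j ∈ K)
    (h : cs.simple i * cs.simple j * cs.simple i ∈ cs.parabolic K) : M i j = 2 := by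
  have hij : i ≠ j := fun h ↦ hi (h ▸ hj)
  refine Real.cos_pi_div_natCast_eq_zero (M.off_diagonal i j hij) ?_
  have := cs.geometricRep_apply_of_notMem h hi (Finsupp.single i 1)
  rw [map_mul, map_mul, LinearEquiv.mul_apply, LinearEquiv.mul_apply,
    geometricRep_simple_single_self, map_neg, geometricRep_simple_single, map_neg, map_add,
    map_smul, geometricRep_simple_single_self, geometricRep_simple_single, M.symmetric j i] at this
  simp [hij.symm] at this
  nlinarith

/-! ### The reflection cocycle -/

open Classical in
/-- The action of a simple reflection on signed elements of `W`. -/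
noncomputable def signedConj (i : B) : Equiv.Perm (W × ZMod 2) :=
  Function.Involutive.toPerm
    (fun p ↦ (cs.simple i * p.1 * cs.simple i, p.2 + if p.1 = cs.simple i then 1 else 0)) <| by
    rintro ⟨t, ε⟩
    have h : cs.simple i * t * cs.simple i = cs.simple i ↔ t = cs.simple i := by
      rw [mul_eq_right, ← inv_simple, inv_mul_eq_one, inv_simple, eq_comm]
    ext
    · simp [mul_assoc]
    · simp only [h, add_assoc, CharTwo.add_self_eq_zero, add_zero]

open Classical in
theorem signedConj_apply (i : B) (t : W) (ε : ZMod 2) : cs.signedConj i (t, ε) =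
    (cs.simple i * t * cs.simple i, ε + if t = cs.simple i then 1 else 0) := rfl

open Classical in
theorem signedConj_mul_pow_apply (i j : B) (n : ℕ) (t : W) (ε : ZMod 2) :
    ((cs.signedConj i * cs.signedConj j) ^ n) (t, ε) =
      ((cs.simple i * cs.simple j) ^ n * t * ((cs.simple i * cs.simple j) ^ n)⁻¹,
        ε + ∑ k ∈ Finset.range (2 * n),
          if (cs.simple i * cs.simple j) ^ k * t = cs.simple j then 1 else 0) := by
  induction n with
  | zero => simp
  | succ n ih =>
    rw [pow_succ', Equiv.Perm.mul_apply, ih, Equiv.Perm.mul_apply, signedConj_apply,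
      signedConj_apply]
    set g := cs.simple i * cs.simple j with hg
    have hgi : g⁻¹ = cs.simple j * cs.simple i := by simp [hg]
    have hj : cs.simple j * g ^ n = (g ^ n)⁻¹ * cs.simple j := by
      have h : SemiconjBy (cs.simple j) g g⁻¹ := by simp [SemiconjBy, hg, mul_assoc]
      simpa using (h.pow_right n).eq
    have h1 : g ^ n * t * (g ^ n)⁻¹ = cs.simple j ↔ g ^ (2 * n) * t = cs.simple j := by
      rw [mul_inv_eq_iff_eq_mul, hj, eq_inv_mul_iff_mul_eq, ← mul_assoc, ← pow_add, two_mul]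
    have h2 : cs.simple j * (g ^ n * t * (g ^ n)⁻¹) * cs.simple j = cs.simple i ↔
        g ^ (2 * n + 1) * t = cs.simple j := by
      have h3 : cs.simple j * (g ^ n * t * (g ^ n)⁻¹) * cs.simple j = cs.simple i ↔
          g ^ n * t * (g ^ n)⁻¹ = g⁻¹ * cs.simple j := by
        rw [hgi, ← eq_mul_inv_iff_mul_eq, ← eq_inv_mul_iff_mul_eq, inv_simple,
          ← mul_assoc (cs.simple j)]
      rw [h3, mul_inv_eq_iff_eq_mul, mul_assoc, hj, eq_inv_mul_iff_mul_eq, eq_inv_mul_iff_mul_eq,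
        ← mul_assoc, ← mul_assoc, ← pow_succ, ← pow_add, show n + 1 + n = 2 * n + 1 by ring]
    rw [show 2 * (n + 1) = 2 * n + 1 + 1 by ring, Finset.sum_range_succ, Finset.sum_range_succ]
    simp only [h1, h2]
    ext
    · simp [hg, pow_succ', mul_assoc]
    · simp only [add_assoc]

theorem isLiftable_signedConj : M.IsLiftable cs.signedConj := by
  classical
  intro i j
  refine Equiv.ext fun ⟨t, ε⟩ ↦ ?_
  rw [signedConj_mul_pow_apply, two_mul, Finset.sum_range_add]
  simp only [pow_add, simple_mul_simple_pow, one_mul, CharTwo.add_self_eq_zero]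
  simp

/-- The action of `W` on signed elements of `W` extending `signedConj`. -/
noncomputable def signedConjHom : W →* Equiv.Perm (W × ZMod 2) :=
  cs.lift ⟨cs.signedConj, cs.isLiftable_signedConj⟩

/-- The reflection cocycle. For a reflection `t` it is nonzero exactly when `t` is a right inversion
of `w`. -/
noncomputable def inversionCocycle (w t : W) : ZMod 2 := (cs.signedConjHom w (t, 0)).2

theorem signedConjHom_apply (w t : W) (ε : ZMod 2) :
    cs.signedConjHom w (t, ε) = (w * t * w⁻¹, ε + cs.inversionCocycle w t) := by
  unfold inversionCocycle
  induction w using cs.simple_induction_left generalizing t ε with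
  | one => simp
  | mul_simple_left w i ih =>
    rw [map_mul, Equiv.Perm.mul_apply, Equiv.Perm.mul_apply, ih t ε, ih t 0,
      signedConjHom, cs.lift_apply_simple]
    simp [signedConj_apply, mul_assoc, add_assoc]

theorem inversionCocycle_one (t : W) : cs.inversionCocycle 1 t = 0 := by
  simp [inversionCocycle]

theorem inversionCocycle_mul (v w t : W) : cs.inversionCocycle (v * w) t =
    cs.inversionCocycle w t + cs.inversionCocycle v (w * t * w⁻¹) := by
  rw [inversionCocycle, map_mul, Equiv.Perm.mul_apply, signedConjHom_apply,
    signedConjHom_apply, zero_add]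

open Classical in
theorem inversionCocycle_simple (i : B) (t : W) :
    cs.inversionCocycle (cs.simple i) t = if t = cs.simple i then 1 else 0 := by
  rw [inversionCocycle, signedConjHom, cs.lift_apply_simple]
  simp [signedConj_apply]

theorem eq_simple_of_inversionCocycle_simple_ne_zero {i : B} {t : W}
    (h : cs.inversionCocycle (cs.simple i) t ≠ 0) : t = cs.simple i := by
  classical
  by_contra hne
  exact h (by rw [inversionCocycle_simple, if_neg hne])

theorem mem_rightInvSeq_of_inversionCocycle_ne_zero {ω : List B} {t : W}
    (h : cs.inversionCocycle (cs.wordProd ω) t ≠ 0) : t ∈ cs.rightInvSeq ω := by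
  induction ω with
  | nil => simp [inversionCocycle_one] at h
  | cons i ω ih =>
    rw [wordProd_cons, inversionCocycle_mul] at h
    rw [rightInvSeq, List.mem_cons]
    by_cases h0 : cs.inversionCocycle (cs.wordProd ω) t = 0
    · rw [h0, zero_add] at h
      left
      rw [← cs.eq_simple_of_inversionCocycle_simple_ne_zero h]
      group
    · exact .inr (ih h0)

theorem isRightInversion_of_inversionCocycle_ne_zero {w t : W}
    (h : cs.inversionCocycle w t ≠ 0) : cs.IsRightInversion w t := by
  obtain ⟨ω, hω, rfl⟩ := cs.exists_isReduced w
  exact cs.isRightInversion_of_mem_rightInvSeq hω (cs.mem_rightInvSeq_of_inversionCocycle_ne_zero h)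

theorem inversionCocycle_simple_ne_zero_iff {w : W} {i : B} :
    cs.inversionCocycle w (cs.simple i) ≠ 0 ↔ cs.IsRightDescent w i := by
  classical
  refine ⟨fun h ↦ (cs.isRightInversion_of_inversionCocycle_ne_zero h).2, fun h h0 ↦ ?_⟩
  have h1 : cs.inversionCocycle (w * cs.simple i) (cs.simple i) ≠ 0 := by
    rw [inversionCocycle_mul, inversionCocycle_simple]
    simp [h0]
  exact cs.isRightDescent_iff_not_isRightDescent_mul.mp h
    (cs.isRightInversion_of_inversionCocycle_ne_zero h1).2

theorem mem_parabolic_of_inversionCocycle_ne_zero {J : Set B} {w t : W} (hw : w ∈ cs.parabolic J)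
    (h : cs.inversionCocycle w t ≠ 0) : t ∈ cs.parabolic J := by
  induction hw using Subgroup.closure_induction generalizing t with
  | mem w hw =>
    obtain ⟨j, hj, rfl⟩ := hw
    rw [cs.eq_simple_of_inversionCocycle_simple_ne_zero h]
    exact cs.simple_mem_parabolic hj
  | one => exact absurd (cs.inversionCocycle_one t) h
  | mul v w _ hwJ hv hw =>
    rw [inversionCocycle_mul] at h
    by_cases h0 : cs.inversionCocycle w t = 0
    · rw [h0, zero_add] at h
      have := mul_mem (mul_mem (inv_mem hwJ) (hv h)) hwJ
      rwa [show w⁻¹ * (w * t * w⁻¹) * w = t by group] at this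
    · exact hw h0
  | inv w hwJ hw =>
    have h1 := cs.inversionCocycle_mul w w⁻¹ t
    rw [mul_inv_cancel, inversionCocycle_one] at h1
    have h2 : cs.inversionCocycle w (w⁻¹ * t * w⁻¹⁻¹) ≠ 0 := fun h2 ↦ h <| by
      rw [h2, add_zero] at h1
      exact h1.symm
    have := mul_mem (mul_mem hwJ (hw h2)) (inv_mem hwJ)
    rwa [show w * (w⁻¹ * t * w⁻¹⁻¹) * w⁻¹ = t by group] at this

/-! ### Supports -/

theorem IsReduced.of_append_singleton {cs : CoxeterSystem M W} {ω : List B} {i : B}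
    (h : cs.IsReduced (ω ++ [i])) : cs.IsReduced ω := by
  simpa using h.take ω.length

theorem IsReduced.isRightDescent_append_singleton {cs : CoxeterSystem M W} {ω : List B} {i : B}
    (h : cs.IsReduced (ω ++ [i])) : cs.IsRightDescent (cs.wordProd (ω ++ [i])) i := by
  have h1 := h.of_append_singleton.eq
  have h2 := h.eq
  rw [IsRightDescent, h2]
  simp [wordProd_append, h1]

theorem wordProd_mem_parabolic {J : Set B} {ω : List B} (h : ∀ i ∈ ω, i ∈ J) :
    cs.wordProd ω ∈ cs.parabolic J := by
  induction ω with
  | nil => simp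
  | cons i ω ih =>
    rw [wordProd_cons]
    exact mul_mem (cs.simple_mem_parabolic (h i (by simp))) (ih fun j hj ↦ h j (by simp [hj]))

theorem mem_of_isRightDescent_of_mem_parabolic {J : Set B} {w : W} (hw : w ∈ cs.parabolic J)
    {i : B} (hi : cs.IsRightDescent w i) : i ∈ J :=
  cs.simple_mem_parabolic_iff.mp <| cs.mem_parabolic_of_inversionCocycle_ne_zero hw
    (cs.inversionCocycle_simple_ne_zero_iff.mpr hi)

theorem IsReduced.mem_of_wordProd_mem_parabolic {cs : CoxeterSystem M W} {J : Set B} {ω : List B}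
    (hω : cs.IsReduced ω) (h : cs.wordProd ω ∈ cs.parabolic J) : ∀ i ∈ ω, i ∈ J := by
  induction ω using List.reverseRecOn with
  | nil => simp
  | append_singleton ω i ih =>
    have hi := cs.mem_of_isRightDescent_of_mem_parabolic h hω.isRightDescent_append_singleton
    have h1 : cs.wordProd ω ∈ cs.parabolic J := by
      simpa [wordProd_append] using mul_mem h (cs.simple_mem_parabolic hi)
    intro j hj
    rcases List.mem_append.mp hj with hj | hj
    · exact ih hω.of_append_singleton h1 j hj
    · rwa [List.mem_singleton.mp hj]

theorem IsReduced.support_wordProd {cs : CoxeterSystem M W} {ω : List B} (hω : cs.IsReduced ω) :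
    cs.support (cs.wordProd ω) = {i | i ∈ ω} := by
  ext i
  exact ⟨fun h ↦ h _ (cs.wordProd_mem_parabolic fun _ ↦ id),
    fun hi J hJ ↦ hω.mem_of_wordProd_mem_parabolic hJ i hi⟩

theorem support_mul_simple {w : W} {i : B} (h : ¬ cs.IsRightDescent w i) :
    cs.support (w * cs.simple i) = cs.support w ∪ {i} := by
  obtain ⟨ω, hω, rfl⟩ := cs.exists_isReduced w
  have h1 : cs.IsReduced (ω ++ [i]) := by
    rw [IsReduced, wordProd_append, wordProd_singleton, cs.not_isRightDescent_iff.mp h, hω.eq]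
    simp
  have h2 := h1.support_wordProd
  rw [wordProd_append, wordProd_singleton] at h2
  rw [h2, hω.support_wordProd]
  ext j
  simp [or_comm]

theorem support_simple_mul {w : W} {i : B} (h : ¬ cs.IsLeftDescent w i) :
    cs.support (cs.simple i * w) = cs.support w ∪ {i} := by
  obtain ⟨ω, hω, rfl⟩ := cs.exists_isReduced w
  have h1 : cs.IsReduced (i :: ω) := by
    rw [IsReduced, wordProd_cons, cs.not_isLeftDescent_iff.mp h, hω.eq]
    simp
  have h2 := h1.support_wordProd
  rw [wordProd_cons] at h2
  rw [h2, hω.support_wordProd]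
  ext j
  simp

/-! ### Simple reflections commuting with an element -/

theorem IsReduced.eq_two_of_commute {cs : CoxeterSystem M W} {ω : List B} (hω : cs.IsReduced ω)
    {s : B} (hs : s ∉ ω) (h : Commute (cs.simple s) (cs.wordProd ω)) : ∀ t ∈ ω, M s t = 2 := by
  induction ω using List.reverseRecOn with
  | nil => simp
  | append_singleton ω t ih =>
    set w := cs.wordProd (ω ++ [t]) with hw
    let K : Set B := {i | i ∈ ω ++ [t]}
    have htK : t ∈ K := by simp [K]
    have hwK : w ∈ cs.parabolic K := cs.wordProd_mem_parabolic fun _ ↦ id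
    have htJ := cs.simple_mem_parabolic htK
    have hst : M s t = 2 := by
      have h1 := cs.inversionCocycle_simple_ne_zero_iff.mpr hω.isRightDescent_append_singleton
      rw [← hw] at h1
      have h2 : cs.inversionCocycle (cs.simple s) (w * cs.simple t * w⁻¹) = 0 := by
        by_contra hne
        have := cs.eq_simple_of_inversionCocycle_simple_ne_zero hne
        have hmem := mul_mem (mul_mem hwK htJ) (inv_mem hwK)
        rw [this] at hmem
        exact hs (cs.simple_mem_parabolic_iff.mp hmem)
      have h3 : cs.inversionCocycle (cs.simple s) (cs.simple t) = 0 := by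
        by_contra hne
        have := cs.eq_simple_of_inversionCocycle_simple_ne_zero hne
        rw [this] at htJ
        exact hs (cs.simple_mem_parabolic_iff.mp htJ)
      have h4 := congrArg (cs.inversionCocycle · (cs.simple t)) h.eq
      simp only [inversionCocycle_mul, h2, h3, add_zero, zero_add, inv_simple] at h4
      rw [h4] at h1
      exact cs.eq_two_of_conj_simple_mem_parabolic (K := K) hs htK
        (cs.mem_parabolic_of_inversionCocycle_ne_zero hwK h1)
    have hcomm : Commute (cs.simple s) (cs.simple t) := by
      have := cs.simple_mul_simple_pow s t
      rw [hst, pow_two] at this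
      have h5 := eq_inv_of_mul_eq_one_left this
      rw [mul_inv_rev, inv_simple, inv_simple] at h5
      exact h5
    have hω' : Commute (cs.simple s) (cs.wordProd ω) := by
      have := h.mul_right hcomm
      rwa [hw, wordProd_append, wordProd_singleton, simple_mul_simple_cancel_right] at this
    intro j hj
    rcases List.mem_append.mp hj with hj | hj
    · exact ih hω.of_append_singleton (fun h ↦ hs (by simp [h])) hω' j hj
    · rwa [List.mem_singleton.mp hj]

theorem eq_two_of_commute_of_notMem_support {w : W} {s : B} (hs : s ∉ cs.support w)
    (h : Commute (cs.simple s) w) : ∀ t ∈ cs.support w, M s t = 2 := by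
  obtain ⟨ω, hω, rfl⟩ := cs.exists_isReduced w
  rw [hω.support_wordProd] at hs ⊢
  exact hω.eq_two_of_commute hs h

/-! ### Minimal coset representatives -/

variable {cs}

theorem IsMinimalRep.inversionCocycle_eq_zero {J : Set B} {v t : W} (hv : cs.IsMinimalRep J v)
    (ht : t ∈ cs.parabolic J) : cs.inversionCocycle v t = 0 := by
  by_contra h
  exact (cs.isRightInversion_of_inversionCocycle_ne_zero h).2.not_ge (hv t ht)

theorem IsMinimalRep.isRightDescent_mul_iff {J : Set B} {v u : W} (hv : cs.IsMinimalRep J v)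
    (hu : u ∈ cs.parabolic J) {i : B} (hi : i ∈ J) :
    cs.IsRightDescent (v * u) i ↔ cs.IsRightDescent u i := by
  rw [← inversionCocycle_simple_ne_zero_iff, ← inversionCocycle_simple_ne_zero_iff,
    inversionCocycle_mul, hv.inversionCocycle_eq_zero
      (mul_mem (mul_mem hu (cs.simple_mem_parabolic hi)) (inv_mem hu)), add_zero]

/-- If `v` and `w` are minimal representatives of cosets of `W_J` with `s w ∈ v W_J`, then
either `v = s w`, or `v = w` and `s w = w r` for some `r ∈ J`. -/
theorem IsMinimalRep.eq_or_exists_of_simple_mul_eq {J : Set B} {v w u : W} {s : B}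
    (hw : cs.IsMinimalRep J w) (hv : cs.IsMinimalRep J v) (hu : u ∈ cs.parabolic J)
    (heq : cs.simple s * w = v * u) :
    v = cs.simple s * w ∨ v = w ∧ ∃ r ∈ J, cs.simple s * w = w * cs.simple r := by
  rcases eq_or_ne u 1 with rfl | hu1
  · exact .inl (by simpa using heq.symm)
  obtain ⟨r, hr⟩ := cs.exists_rightDescent_of_ne_one hu1
  have hrJ := cs.mem_of_isRightDescent_of_mem_parabolic hu hr
  have hrW := cs.simple_mem_parabolic hrJ
  have h1 := (hv.isRightDescent_mul_iff hu hrJ).mpr hr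
  rw [← heq, ← inversionCocycle_simple_ne_zero_iff, inversionCocycle_mul,
    hw.inversionCocycle_eq_zero hrW, zero_add] at h1
  have hsw : cs.simple s * w = w * cs.simple r :=
    (mul_inv_eq_iff_eq_mul.mp (cs.eq_simple_of_inversionCocycle_simple_ne_zero h1)).symm
  have hwv : w = v * (u * cs.simple r) := by
    rw [← mul_assoc, ← heq, hsw, simple_mul_simple_cancel_right]
  have hx := mul_mem hu hrW
  suffices u * cs.simple r = 1 from .inr ⟨by rw [hwv, this, mul_one], r, hrJ, hsw⟩
  by_contra hx1
  obtain ⟨j, hj⟩ := cs.exists_rightDescent_of_ne_one hx1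
  have hjJ := cs.mem_of_isRightDescent_of_mem_parabolic hx hj
  have h2 := (hv.isRightDescent_mul_iff hx hjJ).mpr hj
  rw [← hwv] at h2
  exact (hw _ (cs.simple_mem_parabolic hjJ)).not_gt h2

end CoxeterSystem

/-- let `w ∈ W^J`, `s ∉ D_L(w)`, and write `sw = vu` with
`v ∈ W^J`, `u ∈ W_J`. Then `ℓ(v) ≥ ℓ(w)`; moreover `S(v) = S(w)` if `s ∈ J` and
`s` commutes with every element of `S(v)`, and `S(v) = S(w) ∪ {s}` otherwise. -/
theorem support_of_parabolic_factor (cs : CoxeterSystem M W) (J : Set B)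
    (w : W) (hw : cs.IsMinimalRep J w) (s : B) (hs : ¬ cs.IsLeftDescent w s)
    (v u : W) (hv : cs.IsMinimalRep J v) (hu : u ∈ cs.parabolic J)
    (heq : cs.simple s * w = v * u) :
    cs.length w ≤ cs.length v ∧
    ((s ∈ J ∧ ∀ t ∈ cs.support v, M s t = 2) →
      cs.support v = cs.support w) ∧
    (¬ (s ∈ J ∧ ∀ t ∈ cs.support v, M s t = 2) →
      cs.support v = cs.support w ∪ {s}) := by
  rcases hw.eq_or_exists_of_simple_mul_eq hv hu heq with rfl | ⟨rfl, r, hr, hsr⟩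
  · have hsupp := cs.support_simple_mul hs
    refine ⟨?_, fun h ↦ ?_, fun _ ↦ hsupp⟩
    · rw [cs.not_isLeftDescent_iff.mp hs]
      exact Nat.le_succ _
    · have := h.2 s (by rw [hsupp]; simp)
      simp at this
  · refine ⟨le_rfl, fun _ ↦ rfl, fun h ↦ ?_⟩
    suffices s ∈ cs.support v by
      rw [Set.union_eq_left.mpr (Set.singleton_subset_iff.mpr this)]
    by_contra hsv
    have hr' : ¬ cs.IsRightDescent v r := (hw _ (cs.simple_mem_parabolic hr)).not_gt
    have h1 := cs.support_simple_mul hs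
    rw [hsr, cs.support_mul_simple hr'] at h1
    have h2 : s ∈ cs.support v ∪ {r} := by rw [h1]; simp
    obtain rfl : s = r := h2.resolve_left hsv
    exact h ⟨hr, cs.eq_two_of_commute_of_notMem_support hsv hsr⟩
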